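/- Let O ⊂ [0,1] be the set of maximizers of 𝑝̃ on [0,1] and, for m ∈ [0,1], let d(m) denote the distance from m to O. Then for every δ > 0 there exist η > 0 and a constant K such that for all N ≥ 1, ℙ(d(m(σ)) ≥ δ) ≤ K·e^{−Nη}, where σ is drawn from the weighted Curie–Weiss Gibbs measure. -/

import Mathlib

open Real Finset MeasureTheory

noncomputable section

/-- Dimer configurations (matchings of the complete graph on `Fin N`), encoded as
involutions of `Fin N`: fixed points are monomers, 2-cycles are dimers. -/
abbrev Dimer (N : ℕ) := {f : Fin N → Fin N // ∀ i, f (f i) = i}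

/-- The set of monomers (dimer-free vertices) of a dimer configuration. -/
def monomers {N : ℕ} (D : Dimer N) : Finset (Fin N) :=
  Finset.univ.filter fun i => D.1 i = i

/-- Monomer density `m(D) = |𝓜(D)|/N`. -/
def mDim {N : ℕ} (D : Dimer N) : ℝ := ((monomers D).card : ℝ) / N

/-- The parameter `b = (log N)/2 + h - J`. -/
def bIMD (N : ℕ) (J h : ℝ) : ℝ := Real.log N / 2 + h - J

/-- The Gibbs weight `exp(-H(D)) = exp(N (a m(D)^2 + b m(D)))` with `a = J`. -/
def wDim (N : ℕ) (J h : ℝ) (D : Dimer N) : ℝ :=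
  Real.exp (N * (J * mDim D ^ 2 + bIMD N J h * mDim D))

/-- The probability of an event `A` under the IMD Gibbs measure. -/
def probDim (N : ℕ) (J h : ℝ) (A : Dimer N → Prop) : ℝ :=
  (∑ D : Dimer N, Set.indicator {D | A D} (wDim N J h) D) / ∑ D : Dimer N, wDim N J h D

/-- The conditional probability `ℙ(A | B)` under the IMD Gibbs measure. -/
def condProbDim (N : ℕ) (J h : ℝ) (A B : Dimer N → Prop) : ℝ :=
  (∑ D : Dimer N, Set.indicator {D | A D ∧ B D} (wDim N J h) D) /
    ∑ D : Dimer N, Set.indicator {D | B D} (wDim N J h) D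

/-- `g(x) = (√(e^{4x} + 4 e^{2x}) - e^{2x})/2`. -/
def gFun (x : ℝ) : ℝ := (Real.sqrt (Real.exp (4*x) + 4 * Real.exp (2*x)) - Real.exp (2*x)) / 2

/-- `τ(x) = (2x-1)J + h`. -/
def tauFun (J h x : ℝ) : ℝ := (2*x - 1) * J + h

/-- `𝑝̃(m) = -J m² - (1 - g(τ(m)) + log(1 - g(τ(m))))/2`. -/
def ptilde (J h m : ℝ) : ℝ :=
  -J * m^2 - (1 - gFun (tauFun J h m) + Real.log (1 - gFun (tauFun J h m))) / 2

/-- The CDF of a centered Gaussian with variance `v`, evaluated at `z`. -/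
def gaussCDF (v : ℝ) (z : ℝ) : ℝ :=
  (ProbabilityTheory.gaussianReal 0 (Real.toNNReal v) (Set.Iic z)).toReal

/-- Spin configurations `Σ = {0,1}^N`. -/
abbrev Config (N : ℕ) := Fin N → Bool

/-- `𝓐(σ) = {i : σ_i = 1}`. -/
def ASet {N : ℕ} (σ : Config N) : Finset (Fin N) := Finset.univ.filter fun i => σ i = true

/-- `M(σ) = ∑ σ_i`. -/
def Msum {N : ℕ} (σ : Config N) : ℕ := (ASet σ).card

/-- Magnetization `m(σ) = M(σ)/N`. -/
def mConf {N : ℕ} (σ : Config N) : ℝ := (Msum σ : ℝ) / N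

/-- `D(σ)`: the number of dimer configurations `D` with `𝓜(D) = 𝓐(σ)`. -/
def Dcount (N : ℕ) (σ : Config N) : ℕ :=
  (Finset.univ.filter fun D : Dimer N => monomers D = ASet σ).card

/-- The weight `D(σ) exp(-H(σ))` of the weighted Curie–Weiss model. -/
def wConf (N : ℕ) (J h : ℝ) (σ : Config N) : ℝ :=
  (Dcount N σ : ℝ) * Real.exp (N * (J * mConf σ ^ 2 + bIMD N J h * mConf σ))

/-- The probability of an event `A` under the weighted Curie–Weiss Gibbs measure. -/
def probConf (N : ℕ) (J h : ℝ) (A : Config N → Prop) : ℝ :=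
  (∑ σ : Config N, Set.indicator {σ | A σ} (wConf N J h) σ) / ∑ σ : Config N, wConf N J h σ

/-- Expectation under the weighted Curie–Weiss Gibbs measure. -/
def EConf (N : ℕ) (J h : ℝ) (f : Config N → ℝ) : ℝ :=
  (∑ σ : Config N, wConf N J h σ * f σ) / ∑ σ : Config N, wConf N J h σ

/-- `L₁(m) = 2(1-m)(m² - (1-m)e^{2τ(m)})/((1-m) + e^{2τ(m)})`. -/
def Lone (J h m : ℝ) : ℝ :=
  2*(1-m)*(m^2 - (1-m)*Real.exp (2 * tauFun J h m)) / ((1-m) + Real.exp (2 * tauFun J h m))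

/-- `L₂(m) = 4(1-m)(m² + (1-m)e^{2τ(m)})/((1-m) + e^{2τ(m)})`. -/
def Ltwo (J h m : ℝ) : ℝ :=
  4*(1-m)*(m^2 + (1-m)*Real.exp (2 * tauFun J h m)) / ((1-m) + Real.exp (2 * tauFun J h m))

/-- The configuration obtained from `σ` by setting the spins at `u, v` to `s, t`. -/
def upd {N : ℕ} (σ : Config N) (u v : Fin N) (s t : Bool) : Config N :=
  fun i => if i = u then s else if i = v then t else σ i

/-- The edges of the complete graph, enumerated as ordered pairs `u < v`. -/
def cEdges (N : ℕ) : Finset (Fin N × Fin N) := Finset.univ.filter fun p => p.1 < p.2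

/-- The probability of resampling the pair of spins at `(u,v)` to `(s,t)`:
the conditional distribution of `(σ_u, σ_v)` given `(σ_i)_{i ≠ u,v}`. -/
def qCond (N : ℕ) (J h : ℝ) (σ : Config N) (u v : Fin N) (s t : Bool) : ℝ :=
  wConf N J h (upd σ u v s t) / ∑ st : Bool × Bool, wConf N J h (upd σ u v st.1 st.2)

/-- `E[F(σ, σ') | σ]` for the exchangeable pair `(σ, σ')` obtained by resampling the
spins at a uniformly chosen edge. -/
def condE2 (N : ℕ) (J h : ℝ) (F : Config N → Config N → ℝ) (σ : Config N) : ℝ :=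
  ((cEdges N).card : ℝ)⁻¹ * ∑ p ∈ cEdges N, ∑ st : Bool × Bool,
    qCond N J h σ p.1 p.2 st.1 st.2 * F σ (upd σ p.1 p.2 st.1 st.2)

/-- The weight of the Gibbs measure conditioned on the event `S`. -/
def wCond (N : ℕ) (J h : ℝ) (S : Config N → Prop) (σ : Config N) : ℝ :=
  Set.indicator {σ | S σ} (wConf N J h) σ

/-- `ℙ_ℓ(A) = ℙ(A | S)`, probability under the conditioned Gibbs measure. -/
def probL (N : ℕ) (J h : ℝ) (S A : Config N → Prop) : ℝ :=
  (∑ σ : Config N, Set.indicator {σ | A σ} (wCond N J h S) σ) / ∑ σ : Config N, wCond N J h S σ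

/-- Expectation under the conditioned Gibbs measure `ℙ(·|S)`. -/
def EL (N : ℕ) (J h : ℝ) (S : Config N → Prop) (f : Config N → ℝ) : ℝ :=
  (∑ σ : Config N, wCond N J h S σ * f σ) / ∑ σ : Config N, wCond N J h S σ

/-- Resampling probability for the conditioned measure `ℙ(·|S)`. -/
def qCondL (N : ℕ) (J h : ℝ) (S : Config N → Prop) (σ : Config N) (u v : Fin N)
    (s t : Bool) : ℝ :=
  wCond N J h S (upd σ u v s t) / ∑ st : Bool × Bool, wCond N J h S (upd σ u v st.1 st.2)

/-- `E_ℓ[F(σ, σ') | σ]` for the exchangeable pair under the conditioned measure. -/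
def condE2L (N : ℕ) (J h : ℝ) (S : Config N → Prop) (F : Config N → Config N → ℝ)
    (σ : Config N) : ℝ :=
  ((cEdges N).card : ℝ)⁻¹ * ∑ p ∈ cEdges N, ∑ st : Bool × Bool,
    qCondL N J h S σ p.1 p.2 st.1 st.2 * F σ (upd σ p.1 p.2 st.1 st.2)

/-- The maximizer set `O` of `𝑝̃` on `[0,1]`. -/
def maxSet (J h : ℝ) : Set ℝ :=
  {x | x ∈ Set.Icc (0:ℝ) 1 ∧ ∀ y ∈ Set.Icc (0:ℝ) 1, ptilde J h y ≤ ptilde J h x}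

end

open Polynomial in
/-- Generating polynomial of dimer configurations by number of monomers. -/
noncomputable def matchPoly (n : ℕ) : Polynomial ℝ :=
  ∑ D : Dimer n, (X : Polynomial ℝ) ^ (monomers D).card

open Polynomial in
theorem matchPoly_eq_sum_perm (n : ℕ) :
    matchPoly n = ∑ e : Equiv.Perm (Fin n), if ∀ i, e (e i) = i then
      (X : Polynomial ℝ) ^ (univ.filter fun i => e i = i).card else 0 := by
  rw [← Finset.sum_filter]
  refine Finset.sum_bij' (fun D _ => ⟨D.1, D.1, D.2, D.2⟩) (fun e he => ⟨e, (mem_filter.1 he).2⟩)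
    ?_ ?_ ?_ ?_ ?_
  · intro D _
    exact mem_filter.2 ⟨mem_univ _, D.2⟩
  · intros; exact mem_univ _
  · intros; rfl
  · intro e he
    ext i
    rfl
  · intro D _
    rfl

theorem involutive_decomposeFin_zero {n : ℕ} (e : Equiv.Perm (Fin n)) :
    (∀ i, Equiv.Perm.decomposeFin.symm (0, e) (Equiv.Perm.decomposeFin.symm (0, e) i) = i) ↔
      ∀ i, e (e i) = i := by
  simp [Fin.forall_fin_succ]

theorem involutive_decomposeFin_succ {n : ℕ} (a : Fin n) (e : Equiv.Perm (Fin n)) :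
    (∀ i, Equiv.Perm.decomposeFin.symm (a.succ, e)
      (Equiv.Perm.decomposeFin.symm (a.succ, e) i) = i) ↔ (∀ i, e (e i) = i) ∧ e a = a := by
  rw [Fin.forall_fin_succ]
  simp only [Equiv.Perm.decomposeFin_symm_apply_zero, Equiv.Perm.decomposeFin_symm_apply_succ]
  have h0 : Equiv.swap 0 a.succ (e a).succ = 0 ↔ e a = a := by
    rw [Equiv.swap_apply_eq_iff, Equiv.swap_apply_left, Fin.succ_inj]
  rw [h0, and_comm]
  refine and_congr_left fun ha => forall_congr' fun i => ?_
  by_cases hi : e i = a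
  · have : i = a := e.injective (hi.trans ha.symm)
    subst this
    simp [ha]
  · have hne : (e i).succ ≠ a.succ := fun h => hi (Fin.succ_inj.1 h)
    rw [Equiv.swap_apply_of_ne_of_ne (Fin.succ_ne_zero _) hne,
      Equiv.Perm.decomposeFin_symm_apply_succ]
    by_cases hi' : e (e i) = a
    · exact absurd (e.injective (hi'.trans ha.symm)) hi
    · have hne' : (e (e i)).succ ≠ a.succ := fun h => hi' (Fin.succ_inj.1 h)
      rw [Equiv.swap_apply_of_ne_of_ne (Fin.succ_ne_zero _) hne', Fin.succ_inj]

theorem card_fixed_decomposeFin_zero {n : ℕ} (e : Equiv.Perm (Fin n)) :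
    (univ.filter fun i => Equiv.Perm.decomposeFin.symm (0, e) i = i).card =
      (univ.filter fun i => e i = i).card + 1 := by
  rw [Fin.card_filter_univ_succ]
  simp

theorem card_fixed_decomposeFin_succ {n : ℕ} (a : Fin n) (e : Equiv.Perm (Fin n))
    (ha : e a = a) :
    (univ.filter fun i => Equiv.Perm.decomposeFin.symm (a.succ, e) i = i).card =
      (univ.filter fun i => e i = i).card - 1 := by
  rw [Fin.card_filter_univ_succ, if_neg (by simp)]
  rw [← Finset.card_erase_of_mem (a := a) (by simp [ha])]
  congr 1
  ext i
  simp only [mem_filter, mem_univ, true_and, mem_erase,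
    Equiv.Perm.decomposeFin_symm_apply_succ]
  by_cases hi : i = a
  · subst hi
    simp [ha, (Fin.succ_ne_zero _).symm]
  · have hne : (e i).succ ≠ a.succ :=
      fun h => hi (e.injective ((Fin.succ_inj.1 h).trans ha.symm))
    rw [Equiv.swap_apply_of_ne_of_ne (Fin.succ_ne_zero _) hne, Fin.succ_inj]
    simp [hi]

open Polynomial in
theorem matchPoly_succ (n : ℕ) :
    matchPoly (n + 1) = X * matchPoly n + derivative (matchPoly n) := by
  rw [matchPoly_eq_sum_perm, matchPoly_eq_sum_perm,
    ← Equiv.sum_comp Equiv.Perm.decomposeFin.symm, Fintype.sum_prod_type, Fin.sum_univ_succ]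
  congr 1
  · rw [Finset.mul_sum]
    refine Finset.sum_congr rfl fun e _ => ?_
    simp only [involutive_decomposeFin_zero, card_fixed_decomposeFin_zero, mul_ite, mul_zero,
      pow_succ']
  · rw [Finset.sum_comm, derivative_sum]
    refine Finset.sum_congr rfl fun e _ => ?_
    simp only [involutive_decomposeFin_succ]
    by_cases he : ∀ i, e (e i) = i
    · simp only [he, implies_true, true_and, if_true, derivative_X_pow]
      rw [← Finset.sum_filter, Finset.sum_congr rfl (g := fun _ =>
        (X : Polynomial ℝ) ^ ((univ.filter fun i => e i = i).card - 1))]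
      · simp
      · intro a ha
        rw [card_fixed_decomposeFin_succ a e (mem_filter.1 ha).2]
    · simp [he]

theorem matchPoly_zero : matchPoly 0 = 1 := by
  rw [matchPoly_eq_sum_perm]
  simp

open Polynomial in
theorem derivative_matchPoly_succ (n : ℕ) :
    derivative (matchPoly (n + 1)) = ((n : Polynomial ℝ) + 1) * matchPoly n := by
  induction n with
  | zero => simp [matchPoly_succ, matchPoly_zero]
  | succ n ih =>
    rw [matchPoly_succ (n + 1), derivative_add, derivative_mul, derivative_X, ih, derivative_mul,
      matchPoly_succ n]
    simp
    ring

open Polynomial in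
theorem eval_matchPoly_add_two (n : ℕ) (x : ℝ) :
    (matchPoly (n + 2)).eval x =
      x * (matchPoly (n + 1)).eval x + ((n : ℝ) + 1) * (matchPoly n).eval x := by
  rw [matchPoly_succ (n + 1), derivative_matchPoly_succ]
  simp

theorem eval_matchPoly_eq_sum_config (N : ℕ) (x : ℝ) :
    (matchPoly N).eval x = ∑ σ : Config N, (Dcount N σ : ℝ) * x ^ Msum σ := by
  have h (σ : Config N) : (Dcount N σ : ℝ) * x ^ Msum σ =
      ∑ D : Dimer N, if monomers D = ASet σ then x ^ (monomers D).card else 0 := by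
    rw [← Finset.sum_filter, Finset.sum_congr rfl (g := fun _ => x ^ Msum σ)]
    · simp [Dcount]
    · intro D hD
      rw [(mem_filter.1 hD).2, Msum]
  simp only [h]
  rw [Finset.sum_comm, matchPoly, Polynomial.eval_finsetSum]
  refine Finset.sum_congr rfl fun D _ => ?_
  rw [Finset.sum_eq_single (fun i => decide (i ∈ monomers D))]
  · simp [ASet]
  · intro σ _ hσ
    refine if_neg fun hD => hσ ?_
    ext i
    simp [hD, ASet]
  · simp

/-- The positive root of `ρ² = x ρ + n`. -/
noncomputable def ratioRoot (x : ℝ) (n : ℕ) : ℝ := (√(x ^ 2 + 4 * n) + x) / 2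

/-- The nonnegative root of `s² + x s = n`. -/
noncomputable def saddle (x : ℝ) (n : ℕ) : ℝ := (√(x ^ 2 + 4 * n) - x) / 2

theorem ratioRoot_sq (x : ℝ) (n : ℕ) : ratioRoot x n ^ 2 = x * ratioRoot x n + n := by
  have := Real.sq_sqrt (show 0 ≤ x ^ 2 + 4 * (n : ℝ) by positivity)
  unfold ratioRoot
  linarith

theorem saddle_sq (x : ℝ) (n : ℕ) : x * saddle x n + saddle x n ^ 2 = n := by
  have := Real.sq_sqrt (show 0 ≤ x ^ 2 + 4 * (n : ℝ) by positivity)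
  unfold saddle
  linarith

theorem ratioRoot_mul_saddle (x : ℝ) (n : ℕ) : ratioRoot x n * saddle x n = n := by
  have := Real.sq_sqrt (show 0 ≤ x ^ 2 + 4 * (n : ℝ) by positivity)
  unfold ratioRoot saddle
  linarith

theorem le_ratioRoot (x : ℝ) (n : ℕ) : x ≤ ratioRoot x n := by
  have : x ≤ √(x ^ 2 + 4 * n) := Real.le_sqrt_of_sq_le (by linarith [n.cast_nonneg (α := ℝ)])
  unfold ratioRoot
  linarith

theorem saddle_pos (x : ℝ) {n : ℕ} (hn : 1 ≤ n) : 0 < saddle x n := by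
  have hn' : (1 : ℝ) ≤ n := by exact_mod_cast hn
  have : x < √(x ^ 2 + 4 * n) := Real.lt_sqrt_of_sq_lt (by linarith)
  unfold saddle
  linarith

theorem saddle_zero {x : ℝ} (hx : 0 ≤ x) : saddle x 0 = 0 := by
  simp [saddle, Real.sqrt_sq hx]

theorem ratioRoot_add_inv_le {x : ℝ} (hx : 1 ≤ x) (n : ℕ) :
    ratioRoot x n + (ratioRoot x n)⁻¹ ≤ ratioRoot x (n + 2) := by
  have h1 := le_ratioRoot x n
  have h2 := le_ratioRoot x (n + 2)
  have e1 := ratioRoot_sq x n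
  have e2 := ratioRoot_sq x (n + 2)
  push_cast at e2
  set r := ratioRoot x n
  set R := ratioRoot x (n + 2)
  have hr : 0 < r := by linarith
  have hri : r * r⁻¹ = 1 := mul_inv_cancel₀ hr.ne'
  have hi : 0 < r⁻¹ := by positivity
  have hi1 : r⁻¹ ≤ 1 := inv_le_one_of_one_le₀ (by linarith)
  have key : (r + r⁻¹) ^ 2 ≤ x * (r + r⁻¹) + (n + 2) := by
    nlinarith [mul_le_mul_of_nonneg_right (hi1.trans hx) hi.le]
  by_contra! hlt
  nlinarith [mul_pos (show 0 < r + r⁻¹ - R by linarith) (show 0 < r + r⁻¹ + R - x by linarith)]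

section Recurrence

variable {x : ℝ} {Z : ℕ → ℝ}

theorem ratio_bounds (hx : 1 ≤ x) (h0 : Z 0 = 1) (h1 : Z 1 = x)
    (hrec : ∀ n : ℕ, Z (n + 2) = x * Z (n + 1) + ((n : ℝ) + 1) * Z n) (n : ℕ) :
    0 < Z n ∧ ratioRoot x n * Z n ≤ Z (n + 1) ∧ Z (n + 1) ≤ ratioRoot x (n + 1) * Z n := by
  induction n with
  | zero =>
    refine ⟨by simp [h0], ?_, ?_⟩
    · simp [h0, h1, ratioRoot, Real.sqrt_sq (zero_le_one.trans hx)]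
    · simpa [h0, h1] using le_ratioRoot x 1
  | succ n ih =>
    obtain ⟨hp, hl, hu⟩ := ih
    have r0 : 0 < ratioRoot x n := by linarith [le_ratioRoot x n]
    have r1 : 0 < ratioRoot x (n + 1) := by linarith [le_ratioRoot x (n + 1)]
    have hp' : 0 < Z (n + 1) := (mul_pos r0 hp).trans_le hl
    refine ⟨hp', ?_, ?_⟩
    · have e := ratioRoot_sq x (n + 1)
      push_cast at e
      rw [hrec, ← mul_le_mul_iff_right₀ r1]
      have := mul_le_mul_of_nonneg_left hu (show (0 : ℝ) ≤ (n : ℝ) + 1 by positivity)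
      linear_combination this + Z (n + 1) * e
    · have e := ratioRoot_sq x n
      refine le_trans ?_ (mul_le_mul_of_nonneg_right (ratioRoot_add_inv_le hx n) hp'.le)
      rw [hrec, ← mul_le_mul_iff_right₀ r0]
      have hri := mul_inv_cancel₀ r0.ne'
      have := mul_le_mul_of_nonneg_left hl (show (0 : ℝ) ≤ (n : ℝ) + 1 by positivity)
      linear_combination this - Z (n + 1) * e - Z (n + 1) * hri

/-- The saddle point value `n! s⁻ⁿ exp(x s + s²/2)`. -/
noncomputable def saddleValue (x : ℝ) (n : ℕ) : ℝ :=
  n.factorial * (Real.exp (x * saddle x n + saddle x n ^ 2 / 2) / saddle x n ^ n)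

theorem saddleValue_le (hx : 0 ≤ x) (n : ℕ) {t : ℝ} (ht : 0 < t) :
    saddleValue x n ≤ n.factorial * (Real.exp (x * t + t ^ 2 / 2) / t ^ n) := by
  refine mul_le_mul_of_nonneg_left ?_ (by positivity)
  rcases Nat.eq_zero_or_pos n with rfl | hn
  · simp only [saddle_zero hx, pow_zero, div_one, Real.exp_le_exp]
    simp only [mul_zero, ne_eq, OfNat.ofNat_ne_zero, not_false_eq_true, zero_pow, zero_div,
      add_zero]
    positivity
  · have hs := saddle_pos x hn
    have e := saddle_sq x n
    set s := saddle x n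
    have hlog : Real.log t - Real.log s ≤ t / s - 1 := by
      rw [← Real.log_div ht.ne' hs.ne']
      exact Real.log_le_sub_one_of_pos (by positivity)
    have hlog' : n * (Real.log t - Real.log s) ≤ (x + s) * (t - s) := by
      refine (mul_le_mul_of_nonneg_left hlog n.cast_nonneg).trans_eq ?_
      rw [← e]
      field_simp
    have hpow (y : ℝ) (hy : 0 < y) : y ^ n = Real.exp (n * Real.log y) := by
      rw [mul_comm, Real.exp_mul, Real.exp_log hy, Real.rpow_natCast]
    rw [hpow s hs, hpow t ht, ← Real.exp_sub, ← Real.exp_sub, Real.exp_le_exp]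
    nlinarith [sq_nonneg (t - s)]

theorem le_saddleValue (hx : 1 ≤ x) (h0 : Z 0 = 1) (h1 : Z 1 = x)
    (hrec : ∀ n : ℕ, Z (n + 2) = x * Z (n + 1) + ((n : ℝ) + 1) * Z n) (n : ℕ) :
    Z n ≤ saddleValue x n := by
  have hx0 : 0 ≤ x := zero_le_one.trans hx
  induction n with
  | zero => simp [h0, saddleValue, saddle_zero hx0]
  | succ n ih =>
    have hs : 0 < saddle x (n + 1) := saddle_pos x (Nat.succ_pos n)
    have r1 : 0 < ratioRoot x (n + 1) := by linarith [le_ratioRoot x (n + 1)]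
    refine ((ratio_bounds hx h0 h1 hrec n).2.2.trans (mul_le_mul_of_nonneg_left
      (ih.trans (saddleValue_le hx0 n hs)) r1.le)).trans_eq ?_
    have e := ratioRoot_mul_saddle x (n + 1)
    rw [eq_div_of_mul_eq hs.ne' e, saddleValue, Nat.factorial_succ]
    push_cast
    field_simp
    ring

theorem saddleValue_le_mul (hx : 1 ≤ x) (h0 : Z 0 = 1) (h1 : Z 1 = x)
    (hrec : ∀ n : ℕ, Z (n + 2) = x * Z (n + 1) + ((n : ℝ) + 1) * Z n) {n : ℕ} (hn : 1 ≤ n) :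
    saddleValue x n ≤ n * Real.exp 2 * Z n := by
  have hx0 : 0 < x := zero_lt_one.trans_le hx
  induction n, hn using Nat.le_induction with
  | base =>
    refine (saddleValue_le hx0.le 1 (inv_pos.2 hx0)).trans ?_
    have : Real.exp (x * x⁻¹ + x⁻¹ ^ 2 / 2) ≤ Real.exp 2 := by
      rw [Real.exp_le_exp, mul_inv_cancel₀ hx0.ne']
      have := pow_le_one₀ (n := 2) (inv_nonneg.2 hx0.le) (inv_le_one_of_one_le₀ hx)
      linarith
    simpa [h1, div_eq_mul_inv] using mul_le_mul_of_nonneg_right this hx0.le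
  | succ n hn ih =>
    have hs := saddle_pos x hn
    have e := ratioRoot_mul_saddle x n
    have hZ := ratio_bounds hx h0 h1 hrec n
    refine (saddleValue_le hx0.le (n + 1) hs).trans ?_
    calc _ = ((n : ℝ) + 1) / saddle x n * saddleValue x n := by
          rw [saddleValue, Nat.factorial_succ]
          push_cast
          field_simp
          ring
      _ ≤ ((n : ℝ) + 1) / saddle x n * (n * Real.exp 2 * Z n) :=
          mul_le_mul_of_nonneg_left ih (by positivity)
      _ = ((n : ℝ) + 1) * Real.exp 2 * (ratioRoot x n * Z n) := by
          rw [← e]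
          field_simp
      _ ≤ _ := by
          push_cast
          exact mul_le_mul_of_nonneg_left hZ.2.1 (by positivity)

end Recurrence

/-- The limiting pressure `-(1 - g(ξ) + log(1 - g(ξ)))/2` of the noninteracting model. -/
noncomputable def pressure (ξ : ℝ) : ℝ := -(1 - gFun ξ + Real.log (1 - gFun ξ)) / 2

theorem one_sub_gFun (ξ : ℝ) : 1 - gFun ξ = saddle (Real.exp ξ) 1 ^ 2 := by
  have e := saddle_sq (Real.exp ξ) 1
  have h2 : Real.exp (2 * ξ) = Real.exp ξ ^ 2 := by rw [← Real.exp_nat_mul]; norm_num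
  have h4 : Real.exp (4 * ξ) = Real.exp ξ ^ 2 * Real.exp ξ ^ 2 := by
    rw [← h2, ← Real.exp_add]; ring_nf
  have hg : gFun ξ = Real.exp ξ * saddle (Real.exp ξ) 1 := by
    rw [gFun, h2, h4, show Real.exp ξ ^ 2 * Real.exp ξ ^ 2 + 4 * Real.exp ξ ^ 2 =
      Real.exp ξ ^ 2 * (Real.exp ξ ^ 2 + 4) by ring, Real.sqrt_mul (by positivity),
      Real.sqrt_sq (Real.exp_pos ξ).le, saddle]
    push_cast
    ring_nf
  push_cast at e
  linarith

theorem saddle_sqrt_mul (y : ℝ) (N : ℕ) : saddle (√N * y) N = √N * saddle y 1 := by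
  have hN : √(N : ℝ) ^ 2 = N := Real.sq_sqrt N.cast_nonneg
  have : (√N * y) ^ 2 + 4 * (N : ℝ) = N * (y ^ 2 + 4) := by
    rw [mul_pow, hN]; ring
  rw [saddle, saddle, this, Real.sqrt_mul N.cast_nonneg]
  push_cast
  ring_nf

theorem saddleValue_sqrt_mul_exp (N : ℕ) (ξ : ℝ) :
    saddleValue (√N * Real.exp ξ) N =
      N.factorial * Real.exp N / √N ^ N * Real.exp (N * pressure ξ) := by
  have hN : √(N : ℝ) ^ 2 = N := Real.sq_sqrt N.cast_nonneg
  have e := saddle_sq (Real.exp ξ) 1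
  have hu := saddle_pos (Real.exp ξ) le_rfl
  rw [saddleValue, saddle_sqrt_mul, pressure, one_sub_gFun]
  set u := saddle (Real.exp ξ) 1
  have hpow : u ^ N = Real.exp (N * Real.log u) := by
    rw [mul_comm, Real.exp_mul, Real.exp_log hu, Real.rpow_natCast]
  have hexp : Real.exp (√N * Real.exp ξ * (√N * u) + (√N * u) ^ 2 / 2) =
      Real.exp N * Real.exp (N * (-(u ^ 2 + Real.log (u ^ 2)) / 2)) * u ^ N := by
    rw [hpow, ← Real.exp_add, ← Real.exp_add, Real.log_pow]
    congr 1
    push_cast at e ⊢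
    linear_combination (Real.exp ξ * u + u ^ 2 / 2) * hN + N * e
  rw [hexp, mul_pow]
  field_simp

theorem continuous_pressure : Continuous pressure := by
  have hg : Continuous gFun := by unfold gFun; fun_prop
  have hne (ξ : ℝ) : 1 - gFun ξ ≠ 0 := by
    rw [one_sub_gFun]
    exact (pow_pos (saddle_pos _ le_rfl) 2).ne'
  have hl : Continuous fun ξ => Real.log (1 - gFun ξ) := (continuous_const.sub hg).log hne
  unfold pressure
  fun_prop

theorem ptilde_eq (J h m : ℝ) : ptilde J h m = -J * m ^ 2 + pressure (tauFun J h m) := by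
  rw [ptilde, pressure]
  ring

theorem continuous_ptilde (J h : ℝ) : Continuous (ptilde J h) := by
  have hp := continuous_pressure
  have ht : Continuous (tauFun J h) := by unfold tauFun; fun_prop
  rw [funext (ptilde_eq J h)]
  exact (by fun_prop : Continuous fun m : ℝ => -J * m ^ 2).add (hp.comp ht)

theorem exists_ptilde_gap (J h : ℝ) {δ : ℝ} (hδ : 0 < δ) :
    ∃ y ∈ Set.Icc (0 : ℝ) 1, ∃ ε > 0, ∀ m ∈ Set.Icc (0 : ℝ) 1,
      δ ≤ Metric.infDist m (maxSet J h) → ptilde J h m ≤ ptilde J h y - ε := by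
  have hc := (continuous_ptilde J h).continuousOn (s := Set.univ)
  obtain ⟨y, hy, hmax⟩ := isCompact_Icc.exists_isMaxOn (Set.nonempty_Icc.2 zero_le_one)
    (hc.mono (Set.subset_univ (Set.Icc (0 : ℝ) 1)))
  refine ⟨y, hy, ?_⟩
  have hcomp : IsCompact (Set.Icc (0 : ℝ) 1 ∩ {m | δ ≤ Metric.infDist m (maxSet J h)}) :=
    isCompact_Icc.inter_right (isClosed_le continuous_const (Metric.continuous_infDist_pt _))
  rcases Set.eq_empty_or_nonempty
    (Set.Icc (0 : ℝ) 1 ∩ {m | δ ≤ Metric.infDist m (maxSet J h)}) with he | hne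
  · exact ⟨1, one_pos, fun m hm hd =>
      (Set.eq_empty_iff_forall_notMem.1 he m ⟨hm, hd⟩).elim⟩
  · obtain ⟨z, ⟨hz, hzd⟩, hzmax⟩ := hcomp.exists_isMaxOn hne (hc.mono (Set.subset_univ _))
    have hlt : ptilde J h z < ptilde J h y := by
      by_contra! hle
      have hmem : z ∈ maxSet J h := ⟨hz, fun w hw => (hmax hw).trans hle⟩
      have h0 := Metric.infDist_zero_of_mem hmem
      have hzd' : δ ≤ Metric.infDist z (maxSet J h) := hzd
      linarith
    refine ⟨ptilde J h y - ptilde J h z, sub_pos.2 hlt, fun m hm hd => ?_⟩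
    have : ptilde J h m ≤ ptilde J h z := hzmax ⟨hm, hd⟩
    linarith

theorem eval_matchPoly_le (N : ℕ) (ξ : ℝ) (hx : 1 ≤ √N * Real.exp ξ) :
    (matchPoly N).eval (√N * Real.exp ξ) ≤
      N.factorial * Real.exp N / √N ^ N * Real.exp (N * pressure ξ) := by
  rw [← saddleValue_sqrt_mul_exp]
  exact le_saddleValue (Z := fun n => (matchPoly n).eval (√N * Real.exp ξ)) hx
    (by simp [matchPoly_zero]) (by simp [matchPoly_succ, matchPoly_zero])
    (fun n => eval_matchPoly_add_two n _) N

theorem le_eval_matchPoly {N : ℕ} (hN : 1 ≤ N) (ξ : ℝ) (hx : 1 ≤ √N * Real.exp ξ) :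
    N.factorial * Real.exp N / √N ^ N * Real.exp (N * pressure ξ) ≤
      N * Real.exp 2 * (matchPoly N).eval (√N * Real.exp ξ) := by
  rw [← saddleValue_sqrt_mul_exp]
  exact saddleValue_le_mul (Z := fun n => (matchPoly n).eval (√N * Real.exp ξ)) hx
    (by simp [matchPoly_zero]) (by simp [matchPoly_succ, matchPoly_zero])
    (fun n => eval_matchPoly_add_two n _) hN

theorem wConf_nonneg (N : ℕ) (J h : ℝ) (σ : Config N) : 0 ≤ wConf N J h σ := by
  unfold wConf
  positivity

/-- Linearization of the quadratic interaction around `y`. -/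
theorem wConf_eq {N : ℕ} (hN : 1 ≤ N) (J h y : ℝ) (σ : Config N) :
    wConf N J h σ = (Dcount N σ : ℝ) * (√N * Real.exp (tauFun J h y)) ^ Msum σ *
      Real.exp (N * (J * ((mConf σ - y) ^ 2 - y ^ 2))) := by
  have hN0 : (0 : ℝ) < N := by exact_mod_cast hN
  have hm : N * mConf σ = Msum σ := by
    rw [mConf]
    field_simp
  have hpow : (√N * Real.exp (tauFun J h y)) ^ Msum σ =
      Real.exp (N * mConf σ * (Real.log N / 2 + tauFun J h y)) := by
    rw [hm, mul_comm (Msum σ : ℝ), Real.exp_mul, Real.rpow_natCast, Real.exp_add,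
      ← Real.log_sqrt hN0.le, Real.exp_log (Real.sqrt_pos.2 hN0)]
  rw [hpow, mul_assoc, ← Real.exp_add, wConf, bIMD, tauFun]
  ring_nf

theorem exp_mul_eval_matchPoly_le {N : ℕ} (hN : 1 ≤ N) {J : ℝ} (hJ : 0 ≤ J) (h y : ℝ) :
    Real.exp (N * (-J * y ^ 2)) * (matchPoly N).eval (√N * Real.exp (tauFun J h y)) ≤
      ∑ σ : Config N, wConf N J h σ := by
  rw [eval_matchPoly_eq_sum_config, Finset.mul_sum]
  refine Finset.sum_le_sum fun σ _ => ?_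
  rw [wConf_eq hN J h y, mul_comm]
  refine mul_le_mul_of_nonneg_left (Real.exp_le_exp.2 ?_) (by positivity)
  have := mul_nonneg hJ (sq_nonneg (mConf σ - y))
  exact mul_le_mul_of_nonneg_left (by linarith) N.cast_nonneg

theorem sum_wConf_fiber_le {N : ℕ} (hN : 1 ≤ N) (J h : ℝ) (k : ℕ) :
    ∑ σ : Config N with Msum σ = k, wConf N J h σ ≤
      Real.exp (N * (-J * ((k : ℝ) / N) ^ 2)) *
        (matchPoly N).eval (√N * Real.exp (tauFun J h ((k : ℝ) / N))) := by
  rw [eval_matchPoly_eq_sum_config, Finset.mul_sum]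
  refine (Finset.sum_le_sum fun σ hσ => ?_).trans
    (Finset.sum_le_sum_of_subset_of_nonneg (Finset.subset_univ _) fun σ _ _ => by positivity)
  have hm : mConf σ = (k : ℝ) / N := by rw [mConf, (mem_filter.1 hσ).2]
  rw [wConf_eq hN J h ((k : ℝ) / N), mul_comm, hm]
  simp

theorem one_le_sqrt_mul_exp_tauFun {N : ℕ} {J h : ℝ} (hJ : 0 ≤ J)
    (hN : Real.exp (2 * (J - h)) ≤ N) {m : ℝ} (hm : 0 ≤ m) :
    1 ≤ √N * Real.exp (tauFun J h m) := by
  have h1 : Real.exp (J - h) ≤ √N := by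
    refine Real.le_sqrt_of_sq_le ?_
    rw [← Real.exp_nat_mul]
    exact_mod_cast hN
  have h2 : Real.exp (h - J) ≤ Real.exp (tauFun J h m) := by
    rw [Real.exp_le_exp, tauFun]
    nlinarith [mul_nonneg hJ hm]
  calc (1 : ℝ) = Real.exp (J - h) * Real.exp (h - J) := by rw [← Real.exp_add]; simp
    _ ≤ _ := mul_le_mul h1 h2 (Real.exp_pos _).le (Real.sqrt_nonneg _)

theorem probConf_le_one (N : ℕ) (J h : ℝ) (A : Config N → Prop) : probConf N J h A ≤ 1 :=
  div_le_one_of_le₀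
    (Finset.sum_le_sum fun σ _ => Set.indicator_le_self' (fun τ _ => wConf_nonneg N J h τ) σ)
    (Finset.sum_nonneg fun σ _ => wConf_nonneg N J h σ)

theorem Msum_le {N : ℕ} (σ : Config N) : Msum σ ≤ N := by
  simpa [Msum] using (ASet σ).card_le_univ

/-- If `𝑝̃ ≤ 𝑝̃(y) - ε` on the set of densities `B`, then the probability of `B` is at most
`(N + 1) N e² e^{-Nε}`. -/
theorem probConf_le_of_gap {N : ℕ} (hN : 1 ≤ N) {J h : ℝ} (hJ : 0 ≤ J)
    (hlarge : Real.exp (2 * (J - h)) ≤ N) {y ε : ℝ} (hy : 0 ≤ y) (B : ℝ → Prop)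
    (hgap : ∀ m ∈ Set.Icc (0 : ℝ) 1, B m → ptilde J h m ≤ ptilde J h y - ε) :
    probConf N J h (fun σ => B (mConf σ)) ≤
      ((N : ℝ) + 1) * (N * Real.exp 2) * Real.exp (-(N * ε)) := by
  have hN0 : (0 : ℝ) < N := by exact_mod_cast hN
  set C : ℝ := N.factorial * Real.exp N / √N ^ N
  have hCpos : 0 < C := by
    have := Real.sqrt_pos.2 hN0
    positivity
  have hlower : C * Real.exp (N * ptilde J h y) ≤
      N * Real.exp 2 * ∑ σ : Config N, wConf N J h σ := by
    refine le_trans ?_ (mul_le_mul_of_nonneg_left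
      (exp_mul_eval_matchPoly_le hN hJ h y) (by positivity))
    have := mul_le_mul_of_nonneg_left (le_eval_matchPoly hN (tauFun J h y)
      (one_le_sqrt_mul_exp_tauFun hJ hlarge hy)) (Real.exp_pos (N * (-J * y ^ 2))).le
    rw [ptilde_eq, mul_add, Real.exp_add]
    linarith
  have hfiber (k : ℕ) (hk : k ∈ Finset.range (N + 1)) :
      ∑ σ : Config N with Msum σ = k,
        Set.indicator {σ | B (mConf σ)} (wConf N J h) σ ≤
          C * Real.exp (N * (ptilde J h y - ε)) := by
    have hkN : (k : ℝ) ≤ N := by exact_mod_cast Nat.lt_succ_iff.1 (Finset.mem_range.1 hk)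
    have hm : (k : ℝ) / N ∈ Set.Icc (0 : ℝ) 1 :=
      ⟨by positivity, div_le_one_of_le₀ hkN hN0.le⟩
    by_cases hB : B ((k : ℝ) / N)
    · calc _ ≤ ∑ σ : Config N with Msum σ = k, wConf N J h σ :=
            Finset.sum_le_sum fun σ _ =>
              Set.indicator_le_self' (fun τ _ => wConf_nonneg N J h τ) σ
        _ ≤ _ := sum_wConf_fiber_le hN J h k
        _ ≤ Real.exp (N * (-J * ((k : ℝ) / N) ^ 2)) *
              (C * Real.exp (N * pressure (tauFun J h ((k : ℝ) / N)))) :=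
            mul_le_mul_of_nonneg_left (eval_matchPoly_le N _
              (one_le_sqrt_mul_exp_tauFun hJ hlarge hm.1)) (Real.exp_pos _).le
        _ = C * Real.exp (N * ptilde J h ((k : ℝ) / N)) := by
            rw [ptilde_eq, mul_add, Real.exp_add]
            ring
        _ ≤ _ := mul_le_mul_of_nonneg_left (Real.exp_le_exp.2
            (mul_le_mul_of_nonneg_left (hgap _ hm hB) hN0.le)) hCpos.le
    · rw [Finset.sum_eq_zero]
      · positivity
      · intro σ hσ
        refine Set.indicator_of_notMem (fun hBσ => hB ?_) _
        have hBσ' : B (mConf σ) := hBσ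
        rwa [mConf, (mem_filter.1 hσ).2] at hBσ'
  have hupper : ∑ σ : Config N, Set.indicator {σ | B (mConf σ)} (wConf N J h) σ ≤
      ((N : ℝ) + 1) * (C * Real.exp (N * (ptilde J h y - ε))) := by
    rw [← Finset.sum_fiberwise_of_maps_to (s := Finset.univ) (t := Finset.range (N + 1))
      (g := fun σ : Config N => Msum σ)
      (fun σ _ => Finset.mem_range.2 (Nat.lt_succ_iff.2 (Msum_le σ)))]
    refine (Finset.sum_le_sum hfiber).trans_eq ?_
    simp
  have hZ : 0 < ∑ σ : Config N, wConf N J h σ := by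
    have : 0 < C * Real.exp (N * ptilde J h y) := by positivity
    exact pos_of_mul_pos_right (this.trans_le hlower) (by positivity)
  rw [probConf, div_le_iff₀ hZ]
  refine hupper.trans ?_
  rw [mul_sub, sub_eq_add_neg, Real.exp_add]
  have := mul_le_mul_of_nonneg_left hlower
    (show 0 ≤ ((N : ℝ) + 1) * Real.exp (-(N * ε)) by positivity)
  linarith

/-- Large-deviation concentration of the magnetization near the set `O`
of maximizers of `𝑝̃`: for every `δ > 0` there are `η > 0` and `K` with
`ℙ(d(m(σ), O) ≥ δ) ≤ K e^{-Nη}` for all `N ≥ 1`. -/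
theorem stmt9 (J h : ℝ) (hJ : 0 ≤ J) (δ : ℝ) (hδ : 0 < δ) :
    ∃ η : ℝ, 0 < η ∧ ∃ K : ℝ, ∀ N : ℕ, 1 ≤ N →
      probConf N J h (fun σ => δ ≤ Metric.infDist (mConf σ) (maxSet J h))
        ≤ K * Real.exp (-(N:ℝ) * η) := by
  obtain ⟨y, hy, ε, hε, hgap⟩ := exists_ptilde_gap J h hδ
  refine ⟨ε / 2, half_pos hε,
    16 / ε ^ 2 * Real.exp 2 + Real.exp (Real.exp (2 * (J - h)) * (ε / 2)), fun N hN => ?_⟩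
  have hN1 : (1 : ℝ) ≤ N := by exact_mod_cast hN
  rcases le_or_gt (Real.exp (2 * (J - h))) N with hlarge | hsmall
  · refine (probConf_le_of_gap hN hJ hlarge hy.1
      (fun m => δ ≤ Metric.infDist m (maxSet J h)) hgap).trans ?_
    have hsplit : Real.exp (-(N * ε)) =
        Real.exp (-(N : ℝ) * (ε / 2)) * Real.exp (-(N : ℝ) * (ε / 2)) := by
      rw [← Real.exp_add]
      ring_nf
    have hquad : (N : ℝ) ^ 2 * Real.exp (-(N : ℝ) * (ε / 2)) ≤ 8 / ε ^ 2 := by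
      have := Real.quadratic_le_exp_of_nonneg (show 0 ≤ (N : ℝ) * (ε / 2) by positivity)
      rw [neg_mul, Real.exp_neg, ← div_eq_mul_inv, div_le_div_iff₀ (Real.exp_pos _) (by positivity)]
      nlinarith [show 0 ≤ (N : ℝ) * (ε / 2) by positivity]
    have hpoly : ((N : ℝ) + 1) * N ≤ 2 * (N : ℝ) ^ 2 := by nlinarith
    rw [hsplit]
    calc _ = ((N : ℝ) + 1) * N * (Real.exp 2 * Real.exp (-(N : ℝ) * (ε / 2)) *
          Real.exp (-(N : ℝ) * (ε / 2))) := by ring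
      _ ≤ 2 * (N : ℝ) ^ 2 * (Real.exp 2 * Real.exp (-(N : ℝ) * (ε / 2)) *
          Real.exp (-(N : ℝ) * (ε / 2))) := mul_le_mul_of_nonneg_right hpoly (by positivity)
      _ = (N : ℝ) ^ 2 * Real.exp (-(N : ℝ) * (ε / 2)) *
          (2 * Real.exp 2 * Real.exp (-(N : ℝ) * (ε / 2))) := by ring
      _ ≤ 8 / ε ^ 2 * (2 * Real.exp 2 * Real.exp (-(N : ℝ) * (ε / 2))) :=
          mul_le_mul_of_nonneg_right hquad (by positivity)
      _ = 16 / ε ^ 2 * Real.exp 2 * Real.exp (-(N : ℝ) * (ε / 2)) := by ring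
      _ ≤ _ := mul_le_mul_of_nonneg_right (le_add_of_nonneg_right (Real.exp_pos _).le)
          (Real.exp_pos _).le
  · refine (probConf_le_one N J h _).trans ?_
    have h1 : (1 : ℝ) ≤ Real.exp (Real.exp (2 * (J - h)) * (ε / 2)) *
        Real.exp (-(N : ℝ) * (ε / 2)) := by
      rw [← Real.exp_add, Real.one_le_exp_iff]
      have := mul_le_mul_of_nonneg_right hsmall.le (half_pos hε).le
      linarith
    have h2 : 0 ≤ 16 / ε ^ 2 * Real.exp 2 * Real.exp (-(N : ℝ) * (ε / 2)) := by positivity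
    linarith
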